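/- Suppose a ∼_{(0;M)} b, Ext^1_R(R/a, M) = Ext^1_R(R/b, M) = 0, x is a non-zerodivisor on M, and (a, x)M ≠ M ≠ (b, x)M. Then (a, x) and (b, x) are linked by 0 over M/xM: 0 :_{M/xM} a = b(M/xM) and 0 :_{M/xM} b = a(M/xM). -/

import Mathlib

open CategoryTheory

/-- The colon submodule `N :_M a = {m ∈ M | a m ⊆ N}`. -/
def Submodule.colonBy {R M : Type*} [CommRing R] [AddCommGroup M] [Module R M]
    (N : Submodule R M) (a : Ideal R) : Submodule R M :=
  ⨅ r ∈ a, N.comap (LinearMap.lsmul R M r)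

/-!
A linear map `R ⧸ a → N` amounts to an element of `0 :_N a`, namely the image of `1`. Applying
`Hom(R ⧸ a, -)` to the short exact sequence `0 → M → M → M ⧸ xM → 0` given by multiplication by `x`
yields an exact sequence `Hom(R ⧸ a, M) → Hom(R ⧸ a, M ⧸ xM) → Ext¹(R ⧸ a, M) = 0`. Hence
`0 :_{M ⧸ xM} a` is the image of `0 :_M a = bM` in `M ⧸ xM`, which is `b(M ⧸ xM)`.
-/

universe w u

section Ext

variable {C : Type*} [Category* C] [Abelian C] [HasExt.{w} C] {X Y : C}

/- `Ext` is a derived functor of `Hom(-, Y)`, whereas Mathlib's long exact sequences are stated for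
`Abelian.Ext`, defined through the derived category. A projective resolution computes both. -/
theorem subsingleton_abelianExt_succ_of_subsingleton_ext {R : Type*} [Ring R] [Linear R C]
    [EnoughProjectives C] {n : ℕ}
    (h : Subsingleton (((Ext R C (n + 1)).obj (Opposite.op X)).obj Y)) :
    Subsingleton (Abelian.Ext X Y (n + 1)) := by
  let P := ProjectiveResolution.of X
  have hexact : (P.complex.linearYonedaObj R Y).ExactAt (n + 1) :=
    (HomologicalComplex.exactAt_iff_isZero_homology _ _).2 <|
      (ModuleCat.isZero_of_subsingleton _).of_iso (P.isoExt (n + 1) Y).symm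
  rw [HomologicalComplex.exactAt_iff' _ n (n + 1) (n + 2) (by simp) (by simp),
    ShortComplex.moduleCat_exact_iff] at hexact
  refine subsingleton_of_forall_eq 0 fun α ↦ ?_
  obtain ⟨φ, hφ, rfl⟩ := P.extMk_surjective α (n + 2) rfl
  exact (P.extMk_eq_zero_iff φ (n + 2) rfl hφ n rfl).2 (hexact φ hφ)

theorem exists_comp_g_eq_of_subsingleton_abelianExt {S : ShortComplex C} (hS : S.ShortExact)
    (h : Subsingleton (Abelian.Ext X S.X₁ 1)) (φ : X ⟶ S.X₃) :
    ∃ ψ : X ⟶ S.X₂, ψ ≫ S.g = φ := by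
  obtain ⟨α, hα⟩ := Abelian.Ext.covariant_sequence_exact₃ X hS (Abelian.Ext.mk₀ φ)
    (zero_add 1) (Subsingleton.elim _ _)
  obtain ⟨ψ, rfl⟩ := (Abelian.Ext.mk₀_bijective X S.X₂).surjective α
  rw [Abelian.Ext.mk₀_comp_mk₀] at hα
  exact ⟨ψ, (Abelian.Ext.mk₀_bijective X S.X₃).injective hα⟩

end Ext

section Colon

variable {R M : Type*} [CommRing R] [AddCommGroup M] [Module R M] {a : Ideal R} {m : M}

theorem mem_colonBy {N : Submodule R M} : m ∈ N.colonBy a ↔ ∀ r ∈ a, r • m ∈ N := by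
  simp [Submodule.colonBy]

theorem mem_colonBy_bot_iff_exists_linearMap :
    m ∈ (⊥ : Submodule R M).colonBy a ↔ ∃ φ : R ⧸ a →ₗ[R] M, φ 1 = m := by
  simp only [mem_colonBy, Submodule.mem_bot]
  constructor
  · intro hm
    exact ⟨a.liftQ (LinearMap.toSpanSingleton R M m) hm, one_smul R m⟩
  · rintro ⟨φ, rfl⟩ r hr
    have hr_one : r • (1 : R ⧸ a) = 0 :=
      Module.mem_annihilator.1 (by rwa [Ideal.annihilator_quotient]) 1
    rw [← map_smul, hr_one, map_zero]

theorem exact_lsmul_mkQ_span_singleton_smul_top (x : R) :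
    Function.Exact (LinearMap.lsmul R M x) (Ideal.span {x} • ⊤ : Submodule R M).mkQ := by
  rw [Submodule.ideal_span_singleton_smul]
  exact LinearMap.exact_lsmul_mkQ_smul_top M x

end Colon

section Descent

variable {R K M Q : Type u} [CommRing R] [AddCommGroup K] [Module R K] [AddCommGroup M]
  [Module R M] [AddCommGroup Q] [Module R Q] {a b : Ideal R}

theorem map_colonBy_bot_of_exact {f : K →ₗ[R] M} {g : M →ₗ[R] Q} (hf : Function.Injective f)
    (hfg : Function.Exact f g) (hg : Function.Surjective g)
    (hext : Subsingleton (Abelian.Ext (ModuleCat.of R (R ⧸ a)) (ModuleCat.of R K) 1)) :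
    ((⊥ : Submodule R M).colonBy a).map g = (⊥ : Submodule R Q).colonBy a := by
  have hS : (ShortComplex.moduleCatMk f g hfg.linearMap_comp_eq_zero).ShortExact :=
    ModuleCat.shortComplex_shortExact _ hfg hf hg
  ext q
  simp only [Submodule.mem_map, mem_colonBy_bot_iff_exists_linearMap]
  constructor
  · rintro ⟨_, ⟨φ, rfl⟩, rfl⟩
    exact ⟨g ∘ₗ φ, rfl⟩
  · rintro ⟨φ, rfl⟩
    obtain ⟨ψ, hψ⟩ := exists_comp_g_eq_of_subsingleton_abelianExt hS hext (ModuleCat.ofHom φ)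
    exact ⟨ψ.hom 1, ⟨ψ.hom, rfl⟩, congr($hψ 1)⟩

theorem colonBy_bot_quotient_eq_smul_top (hab : (⊥ : Submodule R M).colonBy a = b • ⊤)
    (hext : Subsingleton (((Ext R (ModuleCat R) 1).obj (Opposite.op (ModuleCat.of R (R ⧸ a)))).obj
      (ModuleCat.of R M)))
    {x : R} (hx : IsSMulRegular M x) :
    (⊥ : Submodule R (M ⧸ (Ideal.span {x} • ⊤ : Submodule R M))).colonBy a = b • ⊤ := by
  rw [← map_colonBy_bot_of_exact (f := LinearMap.lsmul R M x) hx
      (exact_lsmul_mkQ_span_singleton_smul_top x) (Submodule.mkQ_surjective _)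
      (subsingleton_abelianExt_succ_of_subsingleton_ext hext),
    hab, Submodule.map_smul'', Submodule.map_top, Submodule.range_mkQ]

end Descent

theorem linked_quot_of_linked_general {R M : Type u} [CommRing R] [AddCommGroup M] [Module R M]
    (a b : Ideal R)
    (hab : (⊥ : Submodule R M).colonBy a = b • ⊤ ∧ (⊥ : Submodule R M).colonBy b = a • ⊤)
    (hexta : Subsingleton
      (((Ext R (ModuleCat R) 1).obj (Opposite.op (ModuleCat.of R (R ⧸ a)))).obj
        (ModuleCat.of R M)))
    (hextb : Subsingleton
      (((Ext R (ModuleCat R) 1).obj (Opposite.op (ModuleCat.of R (R ⧸ b)))).obj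
        (ModuleCat.of R M)))
    (x : R) (hx : IsSMulRegular M x) :
    (⊥ : Submodule R (M ⧸ (Ideal.span {x} • ⊤ : Submodule R M))).colonBy a =
        b • ⊤ ∧
      (⊥ : Submodule R (M ⧸ (Ideal.span {x} • ⊤ : Submodule R M))).colonBy b =
        a • ⊤ :=
  ⟨colonBy_bot_quotient_eq_smul_top hab.1 hexta hx,
    colonBy_bot_quotient_eq_smul_top hab.2 hextb hx⟩

/-- If `a ∼_{(0;M)} b`, `Ext¹_R(R/a, M) = Ext¹_R(R/b, M) = 0`, `x` is a
non-zerodivisor on `M` and `(a,x)M ≠ M ≠ (b,x)M`, then `(a,x)` and `(b,x)` are linked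
by `0` over `M/xM`: `0 :_{M/xM} a = b·(M/xM)` and `0 :_{M/xM} b = a·(M/xM)`. -/
theorem linked_quot_of_linked {R M : Type} [CommRing R] [IsNoetherianRing R]
    [AddCommGroup M] [Module R M] [Module.Finite R M]
    (a b : Ideal R)
    (hab : (⊥ : Submodule R M).colonBy a = b • ⊤ ∧ (⊥ : Submodule R M).colonBy b = a • ⊤)
    (haM : a • (⊤ : Submodule R M) ≠ ⊤) (hbM : b • (⊤ : Submodule R M) ≠ ⊤)
    (hexta : Subsingleton
      (((Ext R (ModuleCat R) 1).obj (Opposite.op (ModuleCat.of R (R ⧸ a)))).obj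
        (ModuleCat.of R M)))
    (hextb : Subsingleton
      (((Ext R (ModuleCat R) 1).obj (Opposite.op (ModuleCat.of R (R ⧸ b)))).obj
        (ModuleCat.of R M)))
    (x : R) (hx : IsSMulRegular M x)
    (haxM : (a ⊔ Ideal.span {x}) • (⊤ : Submodule R M) ≠ ⊤)
    (hbxM : (b ⊔ Ideal.span {x}) • (⊤ : Submodule R M) ≠ ⊤) :
    (⊥ : Submodule R (M ⧸ (Ideal.span {x} • ⊤ : Submodule R M))).colonBy a =
        b • ⊤ ∧
      (⊥ : Submodule R (M ⧸ (Ideal.span {x} • ⊤ : Submodule R M))).colonBy b =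
        a • ⊤ :=
  linked_quot_of_linked_general a b hab hexta hextb x hx
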